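/- arXiv:2012.14021 — 6 statements merged into one kernel-verified Lean document; each statement's English description precedes it below -/
import Mathlib

section
/- Let a₀, a₁, a₂ ∈ ℂ with a₂ ≠ 0, let β ∈ ℂ satisfy β² = a₁² − 4a₀a₂ and Re(β) > 0, set y± = (−a₁ ± β)/(2a₂), and fix y₀ ∈ ℂ with y₀ ≠ y₊. Define y(t) = [y₊(y₀ − y₋) − y₋(y₀ − y₊)exp(βt)] / [(y₀ − y₋) − (y₀ − y₊)exp(βt)]. Then y(t) tends to y₋ as t → +∞ (along the real axis). -/
/-!
Multiplying numerator and denominator of `y t` by `exp (-(β * t))` turns `y` into a fraction that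
is affine in `exp (-(β * t))` above and below. That exponential has norm `exp (-(Re β * t))`, hence
tends to `0`, and the fraction tends to `(-ym * (y0 - yp)) / (-(y0 - yp)) = ym`, as `y0 ≠ yp`.
-/

theorem stmt_5 (a0 a1 a2 β y0 : ℂ) (ha2 : a2 ≠ 0)
    (hβ : β ^ 2 = a1 ^ 2 - 4 * a0 * a2) (hre : 0 < β.re)
    (yp ym : ℂ) (hyp : yp = (-a1 + β) / (2 * a2)) (hym : ym = (-a1 - β) / (2 * a2))
    (hy0 : y0 ≠ yp)
    (y : ℝ → ℂ)
    (hy : ∀ t : ℝ, y t = (yp * (y0 - ym) - ym * (y0 - yp) * Complex.exp (β * t)) /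
      ((y0 - ym) - (y0 - yp) * Complex.exp (β * t))) :
    Filter.Tendsto y Filter.atTop (nhds ym) := by
  have hE : Filter.Tendsto (fun t : ℝ => Complex.exp (-(β * t))) Filter.atTop (nhds 0) := by
    rw [tendsto_zero_iff_norm_tendsto_zero]
    simp only [Complex.norm_exp, Complex.neg_re, Complex.re_mul_ofReal]
    exact Real.tendsto_exp_neg_atTop_nhds_zero.comp
      (Filter.tendsto_id.const_mul_atTop hre)
  -- Cancelling `exp (β * t)` from the fraction is valid even where the denominator vanishes,
  -- since both sides are then `0`.
  have hy' : y = fun t : ℝ =>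
      (yp * (y0 - ym) * Complex.exp (-(β * t)) - ym * (y0 - yp)) /
        ((y0 - ym) * Complex.exp (-(β * t)) - (y0 - yp)) := by
    funext t
    have h1 : Complex.exp (β * t) * Complex.exp (-(β * t)) = 1 := by
      rw [← Complex.exp_add, add_neg_cancel, Complex.exp_zero]
    rw [hy t, ← mul_div_mul_right _ _ (Complex.exp_ne_zero (-(β * t)))]
    congr 1
    · linear_combination (-ym * (y0 - yp)) * h1
    · linear_combination (-(y0 - yp)) * h1
  have hne : y0 - yp ≠ 0 := sub_ne_zero.mpr hy0
  have hlim := ((hE.const_mul (yp * (y0 - ym))).sub_const (ym * (y0 - yp))).div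
    ((hE.const_mul (y0 - ym)).sub_const (y0 - yp)) (by simpa [sub_eq_zero] using hy0.symm)
  have hval : (yp * (y0 - ym) * 0 - ym * (y0 - yp)) / ((y0 - ym) * 0 - (y0 - yp)) = ym := by
    rw [mul_zero, mul_zero, zero_sub, zero_sub, neg_div_neg_eq, mul_div_cancel_right₀ _ hne]
  rw [hval] at hlim
  rw [hy']
  exact hlim
end

section
/- Let A₁₁, A₁₂, A₂₁, A₂₂, a₁₂, a₁₁, a₁₀, a₂₂, a₂₁, a₂₀ ∈ ℂ with D := A₁₁A₂₂ − A₁₂A₂₁ ≠ 0. Let y₁, y₂ : ℝ → ℂ be differentiable with y₁′(t) = a₁₂y₁(t)² + a₁₁y₁(t) + a₁₀ and y₂′(t) = a₂₂y₂(t)² + a₂₁y₂(t) + a₂₀ for all t. Define x₁(t) = A₁₁y₁(t) + A₁₂y₂(t) and x₂(t) = A₂₁y₁(t) + A₂₂y₂(t). Then x₁, x₂ satisfy, for all t ∈ ℝ, x₁′ = c₁₁x₁² + c₁₂x₁x₂ + c₁₃x₂² + c₁₄x₁ + c₁₅x₂ + c₁₆ and x₂′ = c₂₁x₁² + c₂₂x₁x₂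 + c₂₃x₂² + c₂₄x₁ + c₂₅x₂ + c₂₆, where c₁₁ = [a₁₂A₁₁A₂₂² + a₂₂A₁₂A₂₁²]/D², c₁₂ = −2A₁₁A₁₂[a₁₂A₂₂ + a₂₂A₂₁]/D², c₁₃ = A₁₁A₁₂[a₁₂A₁₂ + a₂₂A₁₁]/D², c₁₄ = (a₁₁A₁₁A₂₂ − a₂₁A₁₂A₂₁)/D, c₁₅ = −(a₁₁ − a₂₁)A₁₁A₁₂/D, c₁₆ = a₁₀A₁₁ + a₂₀A₁₂, c₂₃ = [a₂₂A₂₂A₁₁² + a₁₂A₂₁A₁₂²]/D², c₂₂ = −2A₂₂A₂₁[a₂₂A₁₁ + a₁₂A₁₂]/D², c₂₁ = A₂₂A₂₁[a₂₂A₂₁ + a₁₂A₂₂]/D², c₂₅ = (a₂₁A₁₁A₂₂ − a₁₁A₁₂A₂₁)/D, c₂₄ = −(a₂₁ − a₁₁)A₂₂A₂₁/D, c₂₆ = a₂₀A₂₂ + a₁₀A₂₁. -/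
theorem stmt_7 (A11 A12 A21 A22 a12 a11 a10 a22 a21 a20 : ℂ)
    (D : ℂ) (hD : D = A11 * A22 - A12 * A21) (hD0 : D ≠ 0)
    (y1 y2 : ℝ → ℂ)
    (hy1 : ∀ t : ℝ, HasDerivAt y1 (a12 * (y1 t) ^ 2 + a11 * y1 t + a10) t)
    (hy2 : ∀ t : ℝ, HasDerivAt y2 (a22 * (y2 t) ^ 2 + a21 * y2 t + a20) t)
    (x1 x2 : ℝ → ℂ)
    (hx1 : ∀ t : ℝ, x1 t = A11 * y1 t + A12 * y2 t)
    (hx2 : ∀ t : ℝ, x2 t = A21 * y1 t + A22 * y2 t)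
    (c11 c12 c13 c14 c15 c16 c21 c22 c23 c24 c25 c26 : ℂ)
    (hc11 : c11 = (a12 * A11 * A22 ^ 2 + a22 * A12 * A21 ^ 2) / D ^ 2)
    (hc12 : c12 = -2 * A11 * A12 * (a12 * A22 + a22 * A21) / D ^ 2)
    (hc13 : c13 = A11 * A12 * (a12 * A12 + a22 * A11) / D ^ 2)
    (hc14 : c14 = (a11 * A11 * A22 - a21 * A12 * A21) / D)
    (hc15 : c15 = -(a11 - a21) * A11 * A12 / D)
    (hc16 : c16 = a10 * A11 + a20 * A12)
    (hc23 : c23 = (a22 * A22 * A11 ^ 2 + a12 * A21 * A12 ^ 2) / D ^ 2)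
    (hc22 : c22 = -2 * A22 * A21 * (a22 * A11 + a12 * A12) / D ^ 2)
    (hc21 : c21 = A22 * A21 * (a22 * A21 + a12 * A22) / D ^ 2)
    (hc25 : c25 = (a21 * A11 * A22 - a11 * A12 * A21) / D)
    (hc24 : c24 = -(a21 - a11) * A22 * A21 / D)
    (hc26 : c26 = a20 * A22 + a10 * A21) :
    ∀ t : ℝ,
      HasDerivAt x1 (c11 * (x1 t) ^ 2 + c12 * x1 t * x2 t + c13 * (x2 t) ^ 2 +
        c14 * x1 t + c15 * x2 t + c16) t ∧
      HasDerivAt x2 (c21 * (x1 t) ^ 2 + c22 * x1 t * x2 t + c23 * (x2 t) ^ 2 +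
        c24 * x1 t + c25 * x2 t + c26) t := by
  intro t
  -- The Cramer formulas invert the change of variables, since `D ≠ 0`.
  have e1 : y1 t = (A22 * x1 t - A12 * x2 t) / D := by
    rw [eq_div_iff hD0, hx1, hx2, hD]; ring
  have e2 : y2 t = (A11 * x2 t - A21 * x1 t) / D := by
    rw [eq_div_iff hD0, hx1, hx2, hD]; ring
  have d1 := ((hy1 t).const_mul A11).add ((hy2 t).const_mul A12)
  have d2 := ((hy1 t).const_mul A21).add ((hy2 t).const_mul A22)
  -- Once `y1 t`, `y2 t` are expressed through `x1 t`, `x2 t`, the coefficients agree as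
  -- polynomials in `D⁻¹`, the entries of the matrix and the Riccati coefficients.
  constructor
  · refine (d1.congr_of_eventuallyEq (.of_forall hx1)).congr_deriv ?_
    rw [e1, e2, hc11, hc12, hc13, hc14, hc15, hc16]; ring
  · refine (d2.congr_of_eventuallyEq (.of_forall hx2)).congr_deriv ?_
    rw [e1, e2, hc21, hc22, hc23, hc24, hc25, hc26]; ring
end

section
/- Let A₁₁, A₁₂, A₂₁, A₂₂, a₁₂, a₂₂ ∈ ℂ with A₂₁ ≠ 0, A₂₂ ≠ 0 and D := A₁₁A₂₂ − A₁₂A₂₁ ≠ 0, and define c₁₁ = [a₁₂A₁₁A₂₂² + a₂₂A₁₂A₂₁²]/D², c₁₂ = −2A₁₁A₁₂[a₁₂A₂₂ + a₂₂A₂₁]/D², c₂₂ = −2A₂₂A₂₁[a₂₂A₁₁ + a₁₂A₁₂]/D², c₂₁ = A₂₂A₂₁[a₂₂A₂₁ + a₁₂A₂₂]/D². Then z₁ := A₁₁/A₂₁ and z₂ := A₁₂/A₂₂ both satisfy the quadratic equation 2c₂₁z² − (2c₁₁ − c₂₂)z − c₁₂ = 0. -/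
theorem stmt_10 (A11 A12 A21 A22 a12 a22 : ℂ)
    (hA21 : A21 ≠ 0) (hA22 : A22 ≠ 0)
    (D : ℂ) (hD : D = A11 * A22 - A12 * A21) (hD0 : D ≠ 0)
    (c11 c12 c21 c22 : ℂ)
    (hc11 : c11 = (a12 * A11 * A22 ^ 2 + a22 * A12 * A21 ^ 2) / D ^ 2)
    (hc12 : c12 = -2 * A11 * A12 * (a12 * A22 + a22 * A21) / D ^ 2)
    (hc22 : c22 = -2 * A22 * A21 * (a22 * A11 + a12 * A12) / D ^ 2)
    (hc21 : c21 = A22 * A21 * (a22 * A21 + a12 * A22) / D ^ 2)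
    (z1 z2 : ℂ) (hz1 : z1 = A11 / A21) (hz2 : z2 = A12 / A22) :
    2 * c21 * z1 ^ 2 - (2 * c11 - c22) * z1 - c12 = 0 ∧
    2 * c21 * z2 ^ 2 - (2 * c11 - c22) * z2 - c12 = 0 := by
  subst hc11 hc12 hc22 hc21 hz1 hz2
  -- Both equations hold identically in `D`: with `S = a22 * A21 + a12 * A22`, the quadratic is
  -- `(2 * S / D ^ 2) * (A21 * z - A11) * (A22 * z - A12)`.
  clear hD
  constructor <;> field_simp <;> ring
end

section
/- Let A₁₁, A₁₂, A₂₁, A₂₂, a₁₂, a₂₂ ∈ ℂ with A₂₁ ≠ 0, A₂₂ ≠ 0 and D := A₁₁A₂₂ − A₁₂A₂₁ ≠ 0, and define c₁₁ = [a₁₂A₁₁A₂₂² + a₂₂A₁₂A₂₁²]/D², c₁₂ = −2A₁₁A₁₂[a₁₂A₂₂ + a₂₂A₂₁]/D², c₁₃ = A₁₁A₁₂[a₁₂A₁₂ + a₂₂A₁₁]/D², c₂₃ = [a₂₂A₂₂A₁₁² + a₁₂A₂₁A₁₂²]/D², c₂₂ = −2A₂₂A₂₁[a₂₂A₁₁ +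 a₁₂A₁₂]/D², c₂₁ = A₂₂A₂₁[a₂₂A₂₁ + a₁₂A₂₂]/D². Then z₁ := A₁₁/A₂₁ and z₂ := A₁₂/A₂₂ both satisfy the cubic equation c₂₁z³ + (c₂₂ − c₁₁)z² + (c₂₃ − c₁₂)z − c₁₃ = 0. -/
theorem stmt_12 (A11 A12 A21 A22 a12 a22 : ℂ)
    (hA21 : A21 ≠ 0) (hA22 : A22 ≠ 0)
    (D : ℂ) (hD : D = A11 * A22 - A12 * A21) (hD0 : D ≠ 0)
    (c11 c12 c13 c21 c22 c23 : ℂ)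
    (hc11 : c11 = (a12 * A11 * A22 ^ 2 + a22 * A12 * A21 ^ 2) / D ^ 2)
    (hc12 : c12 = -2 * A11 * A12 * (a12 * A22 + a22 * A21) / D ^ 2)
    (hc13 : c13 = A11 * A12 * (a12 * A12 + a22 * A11) / D ^ 2)
    (hc23 : c23 = (a22 * A22 * A11 ^ 2 + a12 * A21 * A12 ^ 2) / D ^ 2)
    (hc22 : c22 = -2 * A22 * A21 * (a22 * A11 + a12 * A12) / D ^ 2)
    (hc21 : c21 = A22 * A21 * (a22 * A21 + a12 * A22) / D ^ 2)
    (z1 z2 : ℂ) (hz1 : z1 = A11 / A21) (hz2 : z2 = A12 / A22) :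
    c21 * z1 ^ 3 + (c22 - c11) * z1 ^ 2 + (c23 - c12) * z1 - c13 = 0 ∧
    c21 * z2 ^ 3 + (c22 - c11) * z2 ^ 2 + (c23 - c12) * z2 - c13 = 0 := by
  -- The system is `ẏ₁ = a₁₂ y₁²`, `ẏ₂ = a₂₂ y₂²` in the coordinates `x = A y`, and the cubic says
  -- that the quadratic field is parallel to `(z, 1)`, which holds on both columns of `A`.
  -- Here `D` is only a common nonzero denominator: the numerators vanish identically.
  subst hc11 hc12 hc13 hc21 hc22 hc23 hz1 hz2
  clear hD
  constructor
  · field_simp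
    ring
  · field_simp
    ring
end

section
/- Let c₁₁, c₁₂, c₁₃, c₂₁, c₂₂, c₂₃ ∈ ℂ and z₁, z₂ ∈ ℂ with z₁ ≠ z₂. Suppose the two relations hold: [−c₂₁z₂² + (c₁₁ − c₂₂/2)z₂ + c₁₂/2]z₁ − c₂₂z₂²/2 + (c₁₂/2 − c₂₃)z₂ + c₁₃ = 0 and [−c₂₁z₁² + (c₁₁ − c₂₂/2)z₁ + c₁₂/2]z₂ − c₂₂z₁²/2 + (c₁₂/2 − c₂₃)z₁ + c₁₃ = 0. Then c₁₃ = −c₁₁z₁z₂ − c₁₂(z₁ + z₂)/2 and c₂₃ = −c₂₁z₁z₂ − c₂₂(z₁ + z₂)/2. -/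
theorem stmt_15 (c11 c12 c13 c21 c22 c23 z1 z2 : ℂ) (hz : z1 ≠ z2)
    (h1 : (-c21 * z2 ^ 2 + (c11 - c22 / 2) * z2 + c12 / 2) * z1 -
      c22 * z2 ^ 2 / 2 + (c12 / 2 - c23) * z2 + c13 = 0)
    (h2 : (-c21 * z1 ^ 2 + (c11 - c22 / 2) * z1 + c12 / 2) * z2 -
      c22 * z1 ^ 2 / 2 + (c12 / 2 - c23) * z1 + c13 = 0) :
    c13 = -c11 * z1 * z2 - c12 * (z1 + z2) / 2 ∧
    c23 = -c21 * z1 * z2 - c22 * (z1 + z2) / 2 := by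
  -- With P = c13 + c11 z1 z2 + c12 (z1 + z2) / 2 and Q = c23 + c21 z1 z2 + c22 (z1 + z2) / 2,
  -- the hypotheses read P - z2 Q = 0 and P - z1 Q = 0; subtracting gives (z1 - z2) Q = 0.
  have hQ : c23 + c21 * z1 * z2 + c22 * (z1 + z2) / 2 = 0 := by
    apply mul_left_cancel₀ (sub_ne_zero.mpr hz)
    linear_combination h1 - h2
  constructor
  · linear_combination h1 + z2 * hQ
  · linear_combination hQ
end

section
/- Let f₁, f₂, g, h₁, h₂ ∈ ℂ with f₁ ≠ 0 and f₂ ≠ 0. Let ξ₁, ξ₂ : ℝ → ℂ be differentiable with ξ₁′(t) = f₂ξ₁(t)² + gξ₁(t) + ((f₁/f₂)h₁ + h₂) and ξ₂′(t) = −f₂ξ₂(t)² + gξ₂(t) − (f₁/f₂)h₁ for all t. Define x₁(t) = −(f₂/f₁)ξ₂(t) and x₂(t) = ξ₁(t) + ξ₂(t). Then x₁ and x₂ satisfy, for all t ∈ ℝ, x₁′ = x₁(f₁x₁ + g) + h₁ and x₂′ = x₂(2f₁x₁ + f₂x₂ + g) + h₂. -/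
theorem stmt_17 (f1 f2 g h1 h2 : ℂ) (hf1 : f1 ≠ 0) (hf2 : f2 ≠ 0)
    (ξ1 ξ2 : ℝ → ℂ)
    (hξ1 : ∀ t : ℝ, HasDerivAt ξ1 (f2 * (ξ1 t) ^ 2 + g * ξ1 t + ((f1 / f2) * h1 + h2)) t)
    (hξ2 : ∀ t : ℝ, HasDerivAt ξ2 (-f2 * (ξ2 t) ^ 2 + g * ξ2 t - (f1 / f2) * h1) t)
    (x1 x2 : ℝ → ℂ)
    (hx1 : ∀ t : ℝ, x1 t = -(f2 / f1) * ξ2 t)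
    (hx2 : ∀ t : ℝ, x2 t = ξ1 t + ξ2 t) :
    ∀ t : ℝ,
      HasDerivAt x1 (x1 t * (f1 * x1 t + g) + h1) t ∧
      HasDerivAt x2 (x2 t * (2 * f1 * x1 t + f2 * x2 t + g) + h2) t := by
  intro t
  obtain rfl : x1 = fun t => -(f2 / f1) * ξ2 t := funext hx1
  obtain rfl : x2 = fun t => ξ1 t + ξ2 t := funext hx2
  constructor
  · refine ((hξ2 t).const_mul (-(f2 / f1))).congr_deriv ?_
    field_simp
    ring
  · -- The `h1` terms cancel, and `f2 * (ξ1 ^ 2 - ξ2 ^ 2) = x2 * (2 * f1 * x1 + f2 * x2)`.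
    refine ((hξ1 t).add (hξ2 t)).congr_deriv ?_
    field_simp
    ring
end
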